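/- arXiv:2307.11533 — 3 statements merged into one kernel-verified Lean document; each statement's English description precedes it below -/
import Mathlib

section
/- Let f : [0,∞) → ℝ satisfy |f(x) − f(y)| ≤ L|x − y|^α for all x, y ∈ [0,∞), with L > 0 and α ∈ (0,1]. Then for all n ≥ 1 and all x ∈ (0,∞), the Szász-Mirakjan operator satisfies |f(x) − S_n(f;x)| ≤ (L/n^{α/2}) · x^{α/2}. -/
/-!
`S_n(f; x)` is the expectation of `f (N / n)` for a Poisson variable `N` of mean `n x`. The Hölder
condition bounds its distance to `f x` by `L E|N / n - x| ^ α`, which by Jensen's inequality for the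
concave function `t ↦ t ^ (α / 2)` is at most `L (E(N / n - x) ^ 2) ^ (α / 2)`, and the variance of
`N / n` is `x / n`. The moments of `N` come from the Stein–Chen identity
`E[N g(N)] = r E[g(N + 1)]`, that is, from the fact that size-biasing a Poisson variable of mean `r`
shifts it by one.
-/

open MeasureTheory ProbabilityTheory
open scoped NNReal ENNReal Nat

theorem holderWith_of_dist_le {E F : Type*} [PseudoMetricSpace E] [PseudoMetricSpace F]
    {C r : ℝ≥0} {f : E → F} (hf : ∀ x y, dist (f x) (f y) ≤ C * dist x y ^ (r : ℝ)) :
    HolderWith C r f := fun x y => by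
  rw [edist_nndist, edist_nndist, ← ENNReal.coe_rpow_of_nonneg _ r.coe_nonneg]
  exact_mod_cast hf x y

section Moments

variable {Ω : Type*} [MeasurableSpace Ω] {μ : Measure Ω}

theorem integral_norm_rpow_le_rpow_integral [IsProbabilityMeasure μ] {E : Type*}
    [NormedAddCommGroup E] {X : Ω → E} {p q : ℝ≥0} (hpq : p ≤ q) (hq : q ≠ 0) (hX : MemLp X q μ) :
    ∫ ω, ‖X ω‖ ^ (p : ℝ) ∂μ ≤ (∫ ω, ‖X ω‖ ^ (q : ℝ) ∂μ) ^ (p / q : ℝ) := by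
  have rpow_rpow (t : E) : (‖t‖ ^ (q : ℝ)) ^ (p / q : ℝ) = ‖t‖ ^ (p : ℝ) := by
    rw [← Real.rpow_mul (norm_nonneg t), mul_div_cancel₀ _ (by exact_mod_cast hq)]
  have concave : ConcaveOn ℝ (Set.Ici 0) fun t : ℝ => t ^ (p / q : ℝ) :=
    Real.concaveOn_rpow (by positivity) (div_le_one_of_le₀ (by exact_mod_cast hpq) q.coe_nonneg)
  have hXp : Integrable (fun ω => ‖X ω‖ ^ (p : ℝ)) μ :=
    (hX.mono_exponent (ENNReal.coe_le_coe.2 hpq)).integrable_norm_rpow'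
  simpa only [ENNReal.coe_toReal, rpow_rpow] using concave.le_map_integral
    (Real.continuous_rpow_const (by positivity)).continuousOn isClosed_Ici
    (.of_forall fun ω => by simp only [Set.mem_Ici]; positivity)
    hX.integrable_norm_rpow'
    (by simpa only [Function.comp_def, ENNReal.coe_toReal, rpow_rpow] using hXp)

variable {E F : Type*} [PseudoMetricSpace E] [NormedAddCommGroup F]
  {X : Ω → E} {f : E → F} {C r q : ℝ≥0} {c : E}

theorem integrable_comp_of_holderWith [IsFiniteMeasure μ] (hf : HolderWith C r f)
    (hfX : AEStronglyMeasurable (fun ω => f (X ω)) μ)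
    (hX : MemLp (fun ω => dist (X ω) c) r μ) : Integrable (fun ω => f (X ω)) μ := by
  have hfc : Integrable (fun ω => f (X ω) - f c) μ :=
    (hX.integrable_norm_rpow'.const_mul (C : ℝ)).mono' (hfX.sub aestronglyMeasurable_const)
      (.of_forall fun ω => by simpa [dist_eq_norm] using hf.dist_le (X ω) c)
  simpa only [Pi.add_def, sub_add_cancel] using hfc.add (integrable_const (f c))

theorem norm_sub_integral_comp_le_of_holderWith [IsProbabilityMeasure μ] [NormedSpace ℝ F]
    [CompleteSpace F] (hf : HolderWith C r f) (hfX : AEStronglyMeasurable (fun ω => f (X ω)) μ)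
    (hX : MemLp (fun ω => dist (X ω) c) q μ) (hrq : r ≤ q) (hq : q ≠ 0) :
    ‖f c - ∫ ω, f (X ω) ∂μ‖ ≤ C * (∫ ω, dist (X ω) c ^ (q : ℝ) ∂μ) ^ (r / q : ℝ) := by
  have hXr : MemLp (fun ω => dist (X ω) c) r μ := hX.mono_exponent (by exact_mod_cast hrq)
  have hdist : Integrable (fun ω => dist (X ω) c ^ (r : ℝ)) μ := by
    simpa using hXr.integrable_norm_rpow'
  calc ‖f c - ∫ ω, f (X ω) ∂μ‖
      = ‖∫ ω, (f c - f (X ω)) ∂μ‖ := by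
        rw [integral_sub (integrable_const _) (integrable_comp_of_holderWith hf hfX hXr)]
        simp
    _ ≤ ∫ ω, C * dist (X ω) c ^ (r : ℝ) ∂μ :=
        norm_integral_le_of_norm_le (hdist.const_mul _) (.of_forall fun ω => by
          simpa only [dist_eq_norm_sub', dist_comm] using hf.dist_le (X ω) c)
    _ = C * ∫ ω, dist (X ω) c ^ (r : ℝ) ∂μ := integral_const_mul _ _
    _ ≤ C * (∫ ω, dist (X ω) c ^ (q : ℝ) ∂μ) ^ (r / q : ℝ) := by
        gcongr
        simpa using integral_norm_rpow_le_rpow_integral hrq hq hX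

end Moments

section Poisson

theorem natCast_succ_mul_poissonMeasure_singleton (r : ℝ≥0) (k : ℕ) :
    ((k + 1 : ℕ) : ℝ≥0∞) * Po(r) {k + 1} = r * Po(r) {k} := by
  have hmass : ((k + 1 : ℕ) : ℝ) * (Real.exp (-r) * r ^ (k + 1) / (k + 1)!) =
      r * (Real.exp (-r) * r ^ k / k !) := by
    rw [Nat.factorial_succ]
    push_cast
    field_simp
    ring
  rw [poissonMeasure_singleton, poissonMeasure_singleton, ← ENNReal.ofReal_natCast,
    ← ENNReal.ofReal_coe_nnreal, ← ENNReal.ofReal_mul (by positivity),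
    ← ENNReal.ofReal_mul (by positivity), hmass]

theorem withDensity_natCast_poissonMeasure (r : ℝ≥0) :
    Po(r).withDensity (fun k => ((k : ℝ≥0) : ℝ≥0∞)) = r • Po(r).map (· + 1) := by
  refine Measure.ext_of_singleton fun k => ?_
  rw [withDensity_apply _ (measurableSet_singleton k), lintegral_singleton, Measure.smul_apply,
    Measure.map_apply .of_discrete (measurableSet_singleton k)]
  cases k with
  | zero =>
    have hpre : (· + 1) ⁻¹' {0} = (∅ : Set ℕ) := by ext; simp
    simp [hpre]
  | succ k =>
    have hpre : (· + 1) ⁻¹' {k + 1} = ({k} : Set ℕ) := by ext; simp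
    rw [hpre, ENNReal.smul_def, smul_eq_mul]
    exact_mod_cast natCast_succ_mul_poissonMeasure_singleton r k

variable {E : Type*} [NormedAddCommGroup E] [NormedSpace ℝ E]

theorem integral_natCast_smul_poissonMeasure (r : ℝ≥0) (g : ℕ → E) :
    ∫ k, (k : ℝ) • g k ∂Po(r) = (r : ℝ) • ∫ k, g (k + 1) ∂Po(r) := by
  have h := integral_withDensity_eq_integral_smul (μ := Po(r))
    (f := fun k : ℕ => (k : ℝ≥0)) .of_discrete g
  rw [withDensity_natCast_poissonMeasure, integral_smul_nnreal_measure,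
    integral_map .of_discrete .of_discrete] at h
  exact h.symm

theorem integrable_natCast_smul_poissonMeasure {r : ℝ≥0} {g : ℕ → E}
    (hg : Integrable (fun k => g (k + 1)) Po(r)) :
    Integrable (fun k : ℕ => (k : ℝ) • g k) Po(r) := by
  refine (integrable_withDensity_iff_integrable_smul
    (f := fun k : ℕ => (k : ℝ≥0)) .of_discrete).1 ?_
  rw [withDensity_natCast_poissonMeasure]
  exact ((integrable_map_measure .of_discrete .of_discrete).2 hg).smul_measure_nnreal

theorem integral_natCast_poissonMeasure (r : ℝ≥0) : ∫ k, (k : ℝ) ∂Po(r) = r := by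
  simpa using integral_natCast_smul_poissonMeasure r fun _ => (1 : ℝ)

theorem integrable_natCast_poissonMeasure (r : ℝ≥0) :
    Integrable (fun k : ℕ => (k : ℝ)) Po(r) := by
  simpa using
    integrable_natCast_smul_poissonMeasure (g := fun _ => (1 : ℝ)) (integrable_const 1)

theorem memLp_natCast_poissonMeasure (r : ℝ≥0) : MemLp (fun k : ℕ => (k : ℝ)) 2 Po(r) := by
  have hshift : Integrable (fun k : ℕ => ((k + 1 : ℕ) : ℝ)) Po(r) := by
    push_cast
    exact (integrable_natCast_poissonMeasure r).add (integrable_const 1)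
  have hsq : Integrable (fun k : ℕ => (k : ℝ) ^ 2) Po(r) := by
    simp only [sq]
    exact integrable_natCast_smul_poissonMeasure (g := fun k => (k : ℝ)) hshift
  exact (memLp_two_iff_integrable_sq .of_discrete).2 hsq

theorem variance_natCast_poissonMeasure (r : ℝ≥0) : Var[fun k : ℕ => (k : ℝ); Po(r)] = r := by
  have hsq : ∫ k : ℕ, (k : ℝ) ^ 2 ∂Po(r) = r * (r + 1) := calc
    _ = (r : ℝ) * ∫ k : ℕ, ((k + 1 : ℕ) : ℝ) ∂Po(r) := by
      simpa only [sq] using! integral_natCast_smul_poissonMeasure r fun k => (k : ℝ)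
    _ = r * (r + 1) := by
      push_cast
      rw [integral_add (integrable_natCast_poissonMeasure r) (integrable_const 1),
        integral_natCast_poissonMeasure]
      simp
  rw [variance_eq_sub (memLp_natCast_poissonMeasure r), integral_natCast_poissonMeasure]
  simp only [Pi.pow_apply, hsq]
  ring

end Poisson

section Szasz

variable {F : Type*} [NormedAddCommGroup F] [NormedSpace ℝ F]

/-- The Szász–Mirakjan operator `S_n(f; x)`, for a function on `[0, ∞)` with values in a normed
space and a parameter `n` that need not be an integer. For `n = 0` every node `k / n` is `0`. -/
noncomputable def szaszMirakjan (n : ℝ≥0) (f : ℝ≥0 → F) (x : ℝ≥0) : F :=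
  ∑' k : ℕ, (Real.exp (-(n * x)) * (n * x) ^ k / k ! : ℝ) • f (k / n)

theorem memLp_dist_natCast_div_poissonMeasure (r n x : ℝ≥0) :
    MemLp (fun k : ℕ => dist (k / n : ℝ≥0) x) 2 Po(r) := by
  simp only [NNReal.dist_eq, ← Real.norm_eq_abs, div_eq_mul_inv]
  exact (((memLp_natCast_poissonMeasure r).mul_const _).sub (memLp_const _)).norm

theorem integral_dist_natCast_div_sq_poissonMeasure {n : ℝ≥0} (hn : n ≠ 0) (x : ℝ≥0) :
    ∫ k : ℕ, dist (k / n : ℝ≥0) x ^ 2 ∂Po(n * x) = x / n := by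
  have hdist (k : ℕ) : dist (k / n : ℝ≥0) x ^ 2 = ((k : ℝ) - (n * x : ℝ≥0)) ^ 2 / n ^ 2 := by
    rw [NNReal.dist_eq, sq_abs]
    push_cast
    field_simp
  have hvar := variance_eq_integral (μ := Po(n * x)) (X := fun k : ℕ => (k : ℝ)) .of_discrete
  rw [variance_natCast_poissonMeasure, integral_natCast_poissonMeasure] at hvar
  simp only [hdist, integral_div, ← hvar]
  push_cast
  field_simp

variable [CompleteSpace F]

theorem szaszMirakjan_eq_integral {n x : ℝ≥0} {f : ℝ≥0 → F}
    (hf : Integrable (fun k : ℕ => f (k / n)) Po(n * x)) :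
    szaszMirakjan n f x = ∫ k : ℕ, f (k / n) ∂Po(n * x) :=
  (integral_poissonMeasure' hf).symm

theorem szasz_mirakjan_plain_holder_general {f : ℝ≥0 → F} {C r : ℝ≥0} (hr : r ≤ 2)
    (hf : HolderWith C r f) {n : ℝ≥0} (hn : n ≠ 0) (x : ℝ≥0) :
    ‖f x - szaszMirakjan n f x‖ ≤ C / (n : ℝ) ^ (r / 2 : ℝ) * (x : ℝ) ^ (r / 2 : ℝ) := by
  have hX := memLp_dist_natCast_div_poissonMeasure (n * x) n x
  have hS : szaszMirakjan n f x = ∫ k : ℕ, f (k / n) ∂Po(n * x) :=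
    szaszMirakjan_eq_integral <|
      integrable_comp_of_holderWith hf .of_discrete (hX.mono_exponent (by exact_mod_cast hr))
  calc ‖f x - szaszMirakjan n f x‖
      ≤ C * (∫ k : ℕ, dist (k / n : ℝ≥0) x ^ 2 ∂Po(n * x)) ^ (r / 2 : ℝ) := by
        rw [hS]
        simpa using norm_sub_integral_comp_le_of_holderWith hf .of_discrete
          (q := 2) (by exact_mod_cast hX) hr two_ne_zero
    _ = C / (n : ℝ) ^ (r / 2 : ℝ) * (x : ℝ) ^ (r / 2 : ℝ) := by
        rw [integral_dist_natCast_div_sq_poissonMeasure hn,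
          Real.div_rpow x.coe_nonneg n.coe_nonneg]
        ring

end Szasz

/-- Error bound for the Szász-Mirakjan operator for a function satisfying the plain Hölder
condition: `|f(x) - S_n(f;x)| ≤ (L / n^(α/2)) · x^(α/2)`. -/
theorem szasz_mirakjan_plain_holder
    (f : ℝ → ℝ) (L α : ℝ) (hL : 0 < L) (hα : 0 < α) (hα1 : α ≤ 1)
    (hf : ∀ y z : ℝ, 0 ≤ y → 0 ≤ z → |f y - f z| ≤ L * |y - z| ^ α)
    (n : ℕ) (hn : 1 ≤ n) (x : ℝ) (hx : 0 < x) :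
    |f x - ∑' (k : ℕ), f ((k : ℝ) / n) * (Real.exp (-(n * x)) * (n * x) ^ k / k.factorial)|
      ≤ L / (n : ℝ) ^ (α / 2) * x ^ (α / 2) := by
  lift L to ℝ≥0 using hL.le
  lift α to ℝ≥0 using hα.le
  lift x to ℝ≥0 using hx.le
  have hf' : HolderWith L α fun y : ℝ≥0 => f y :=
    holderWith_of_dist_le fun y z => hf y z y.coe_nonneg z.coe_nonneg
  simpa [szaszMirakjan, mul_comm] using szasz_mirakjan_plain_holder_general
    ((NNReal.coe_le_one.1 hα1).trans one_le_two) hf'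
    (n := n) (Nat.cast_ne_zero.2 (Nat.one_le_iff_ne_zero.1 hn)) x
end

section
/- Let f : [0,∞) → ℝ satisfy |f(x) − f(y)| ≤ L|x − y|^α for all x, y ∈ [0,∞), with L > 0 and α ∈ (0,1]. Then for all n ≥ 1 and all x ∈ (0,∞), the Baskakov operator satisfies |f(x) − S_n(f;x)| ≤ L · (x(x+1)/n)^{α/2}. -/
/-!
The Baskakov basis consists of nonnegative weights of total mass `1` on the nodes `k / n`, with mean
`x` and variance `c = x (x + 1) / n`. Averaging `|f (k / n) - f x| ≤ L |k / n - x| ^ α` bounds the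
error by `L` times the absolute central moment of order `α`, and Jensen's inequality for the concave
function `u ↦ u ^ (α / 2)`, evaluated at `u = (k / n - x) ^ 2`, bounds that moment by `c ^ (α / 2)`.
-/

section WeightedAverages

theorem rpow_le_rpow_mul_one_add {u c p : ℝ} (hu : 0 ≤ u) (hc : 0 < c) (hp₀ : 0 ≤ p)
    (hp₁ : p ≤ 1) : u ^ p ≤ c ^ p * (1 + p * (u / c - 1)) := by
  have hratio : 0 ≤ u / c := by positivity
  calc u ^ p = c ^ p * (1 + (u / c - 1)) ^ p := by
        rw [add_sub_cancel, ← Real.mul_rpow hc.le hratio, mul_div_cancel₀ _ hc.ne']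
    _ ≤ c ^ p * (1 + p * (u / c - 1)) := by
        gcongr
        exact rpow_one_add_le_one_add_mul_self (by linarith) hp₀ hp₁

variable {ι : Type*} {w : ι → ℝ}

theorem summable_and_tsum_mul_rpow_le_rpow {u : ι → ℝ} {c p : ℝ} (hw : ∀ i, 0 ≤ w i)
    (hw_one : HasSum w 1) (hu : ∀ i, 0 ≤ u i) (huc : HasSum (fun i ↦ w i * u i) c)
    (hp₀ : 0 ≤ p) (hp₁ : p ≤ 1) :
    Summable (fun i ↦ w i * u i ^ p) ∧ ∑' i, w i * u i ^ p ≤ c ^ p := by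
  have hwu : ∀ i, 0 ≤ w i * u i := fun i ↦ mul_nonneg (hw i) (hu i)
  rcases hp₀.eq_or_lt with rfl | hp
  · simpa using ⟨hw_one.summable, hw_one.tsum_eq.le⟩
  rcases (huc.nonneg hwu).eq_or_lt with rfl | hc
  · have hzero : ∀ i, w i * u i ^ p = 0 := fun i ↦ by
      simpa [Real.rpow_eq_zero (hu i) hp.ne'] using
        congrFun ((hasSum_zero_iff_of_nonneg hwu).mp huc) i
    simp [hzero, hp.ne']
  have htangent : HasSum (fun i ↦ w i * (c ^ p * (1 + p * (u i / c - 1)))) (c ^ p) := by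
    convert! (hw_one.mul_left (c ^ p * (1 - p))).add (huc.mul_left (c ^ p * p / c)) using 1
    · ext i
      ring
    · field_simp
      ring
  have hle : ∀ i, w i * u i ^ p ≤ w i * (c ^ p * (1 + p * (u i / c - 1))) := fun i ↦
    mul_le_mul_of_nonneg_left (rpow_le_rpow_mul_one_add (hu i) hc hp₀ hp₁) (hw i)
  have hsummable : Summable (fun i ↦ w i * u i ^ p) :=
    .of_nonneg_of_le (fun i ↦ mul_nonneg (hw i) (Real.rpow_nonneg (hu i) p)) hle htangent.summable
  exact ⟨hsummable, hasSum_le hle hsummable.hasSum htangent⟩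

theorem norm_sub_tsum_smul_le {E : Type*} [NormedAddCommGroup E] [NormedSpace ℝ E]
    [CompleteSpace E] {a : ι → E} {b : E} {g : ι → ℝ} (hw : ∀ i, 0 ≤ w i) (hw_one : HasSum w 1)
    (hab : ∀ i, ‖a i - b‖ ≤ g i) (hg : Summable (fun i ↦ w i * g i)) :
    ‖b - ∑' i, w i • a i‖ ≤ ∑' i, w i * g i := by
  have hbound : ∀ i, ‖w i • (a i - b)‖ ≤ w i * g i := fun i ↦ by
    rw [norm_smul, Real.norm_of_nonneg (hw i)]
    exact mul_le_mul_of_nonneg_left (hab i) (hw i)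
  have hsum : HasSum (fun i ↦ w i • a i) (∑' i, w i • (a i - b) + b) := by
    simpa [smul_sub] using
      (Summable.of_norm_bounded hg hbound).hasSum.add (hw_one.smul_const b)
  rw [hsum.tsum_eq, norm_sub_rev, add_sub_cancel_right]
  exact tsum_of_norm_bounded hg.hasSum hbound

end WeightedAverages

/-- The Baskakov basis function, the weight of the node `k / n` in the Baskakov operator of order
`n`. For `x ≥ 0` and `n ≠ 0` these are the negative binomial probabilities with mean `n x`. -/
noncomputable def baskakovBasis (n : ℕ) (x : ℝ) (k : ℕ) : ℝ :=
  ((n + k - 1).choose k : ℝ) * x ^ k / (1 + x) ^ (n + k)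

/-- The Baskakov operator `S_n(f; x)`, on functions defined on all of `ℝ`; only the values on
`[0, ∞)` matter. As a `tsum` it is `0` where the series diverges. -/
noncomputable def baskakovOperator (n : ℕ) (f : ℝ → ℝ) (x : ℝ) : ℝ :=
  ∑' k : ℕ, f ((k : ℝ) / n) * baskakovBasis n x k

section Moments

variable {n : ℕ} {x : ℝ}

theorem baskakovBasis_nonneg (n : ℕ) (hx : 0 ≤ x) (k : ℕ) : 0 ≤ baskakovBasis n x k := by
  unfold baskakovBasis
  positivity

theorem hasSum_baskakovBasis (hn : n ≠ 0) (hx : 0 ≤ x) : HasSum (baskakovBasis n x) 1 := by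
  obtain ⟨m, rfl⟩ := Nat.exists_eq_succ_of_ne_zero hn
  have hratio : ‖x / (1 + x)‖ < 1 := by
    rw [Real.norm_of_nonneg (by positivity), div_lt_one (by positivity)]
    linarith
  have hcompl : 1 - x / (1 + x) = (1 + x)⁻¹ := by
    field_simp
    ring
  convert! (hasSum_choose_mul_geometric_of_norm_lt_one m hratio).div_const ((1 + x) ^ (m + 1))
    using 1
  · ext k
    have hindex : m + 1 + k - 1 = k + m := by omega
    rw [baskakovBasis, Nat.succ_eq_add_one, hindex, Nat.choose_symm_add, div_pow, pow_add]
    field_simp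
  · rw [hcompl, inv_pow, one_div, inv_inv, div_self (by positivity)]

theorem succ_mul_baskakovBasis_succ (n : ℕ) (x : ℝ) (k : ℕ) :
    ((k + 1 : ℕ) : ℝ) * baskakovBasis n x (k + 1) = n * x * baskakovBasis (n + 1) x k := by
  have hchoose : ((n + k).choose (k + 1) : ℝ) * (k + 1 : ℕ) = (n + k).choose k * n := by
    have hchoose_nat := Nat.choose_succ_right_eq (n + k) k
    rw [Nat.add_sub_cancel] at hchoose_nat
    exact_mod_cast hchoose_nat
  have hindex : n + 1 + k - 1 = n + k := by omega
  rw [baskakovBasis, baskakovBasis, ← add_assoc, Nat.add_sub_cancel, hindex, add_right_comm n 1 k,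
    pow_succ x k]
  linear_combination (x ^ k * x / (1 + x) ^ (n + k + 1)) * hchoose

theorem hasSum_mul_natCast_mul_baskakovBasis {g : ℕ → ℝ} {s : ℝ}
    (hg : HasSum (fun k ↦ g (k + 1) * baskakovBasis (n + 1) x k) s) :
    HasSum (fun k : ℕ ↦ g k * (k * baskakovBasis n x k)) (n * x * s) := by
  rw [← hasSum_nat_add_iff' 1]
  convert! hg.mul_left (n * x) using 1
  · ext k
    rw [succ_mul_baskakovBasis_succ]
    ring
  · simp

theorem hasSum_natCast_mul_baskakovBasis (n : ℕ) (hx : 0 ≤ x) :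
    HasSum (fun k : ℕ ↦ k * baskakovBasis n x k) (n * x) := by
  have hone : HasSum (fun k ↦ 1 * baskakovBasis (n + 1) x k) 1 := by
    simpa only [one_mul] using hasSum_baskakovBasis n.succ_ne_zero hx
  simpa only [one_mul, mul_one] using
    hasSum_mul_natCast_mul_baskakovBasis (g := fun _ ↦ 1) hone

theorem hasSum_sub_one_mul_natCast_mul_baskakovBasis (n : ℕ) (hx : 0 ≤ x) :
    HasSum (fun k : ℕ ↦ ((k : ℝ) - 1) * (k * baskakovBasis n x k)) (n * x * ((n + 1) * x)) :=
  hasSum_mul_natCast_mul_baskakovBasis (g := fun k ↦ (k : ℝ) - 1)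
    (by simpa using hasSum_natCast_mul_baskakovBasis (n + 1) hx)

theorem hasSum_baskakovBasis_mul_sub_sq (hn : n ≠ 0) (hx : 0 ≤ x) :
    HasSum (fun k : ℕ ↦ baskakovBasis n x k * ((k : ℝ) / n - x) ^ 2) (x * (x + 1) / n) := by
  convert! (((hasSum_sub_one_mul_natCast_mul_baskakovBasis n hx).mul_left (1 / (n : ℝ) ^ 2)).add
    ((hasSum_natCast_mul_baskakovBasis n hx).mul_left (1 / (n : ℝ) ^ 2 - 2 * x / n))).add
    ((hasSum_baskakovBasis hn hx).mul_left (x ^ 2)) using 1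
  · ext k
    field_simp
    ring
  · field_simp
    ring

end Moments

theorem baskakov_plain_holder_general {f : ℝ → ℝ} {L α x : ℝ} {n : ℕ} (hα₀ : 0 ≤ α)
    (hα₂ : α ≤ 2) (hn : n ≠ 0) (hx : 0 ≤ x)
    (hf : ∀ y, 0 ≤ y → |f y - f x| ≤ L * |y - x| ^ α) :
    |f x - baskakovOperator n f x| ≤ L * (x * (x + 1) / n) ^ (α / 2) := by
  have hL : 0 ≤ L := by
    simpa using (abs_nonneg _).trans (hf (x + 1) (by positivity))
  have hw := baskakovBasis_nonneg n hx
  have hw_one := hasSum_baskakovBasis hn hx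
  have hnode : ∀ k : ℕ, ‖f ((k : ℝ) / n) - f x‖ ≤ L * (((k : ℝ) / n - x) ^ 2) ^ (α / 2) := by
    intro k
    rw [Real.norm_eq_abs, ← sq_abs, ← Real.rpow_natCast_mul (abs_nonneg _), Nat.cast_ofNat,
      mul_div_cancel₀ α two_ne_zero]
    exact hf _ (by positivity)
  obtain ⟨hsummable, hmoment⟩ := summable_and_tsum_mul_rpow_le_rpow hw hw_one
    (fun k : ℕ ↦ sq_nonneg ((k : ℝ) / n - x)) (hasSum_baskakovBasis_mul_sub_sq hn hx)
    (by positivity) (by linarith : α / 2 ≤ 1)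
  calc |f x - baskakovOperator n f x|
      = ‖f x - ∑' k : ℕ, baskakovBasis n x k • f ((k : ℝ) / n)‖ := by
        simp only [baskakovOperator, smul_eq_mul, mul_comm, Real.norm_eq_abs]
    _ ≤ ∑' k : ℕ, baskakovBasis n x k * (L * (((k : ℝ) / n - x) ^ 2) ^ (α / 2)) :=
        norm_sub_tsum_smul_le hw hw_one hnode
          (by simpa only [mul_left_comm] using hsummable.mul_left L)
    _ = L * ∑' k : ℕ, baskakovBasis n x k * (((k : ℝ) / n - x) ^ 2) ^ (α / 2) := by
        simp only [mul_left_comm _ L, tsum_mul_left]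
    _ ≤ L * (x * (x + 1) / n) ^ (α / 2) := mul_le_mul_of_nonneg_left hmoment hL

/-- Error bound for the Baskakov operator for a function satisfying the plain Hölder condition:
`|f(x) - S_n(f;x)| ≤ L · (x(x+1)/n)^(α/2)`. -/
theorem baskakov_plain_holder
    (f : ℝ → ℝ) (L α : ℝ) (hL : 0 < L) (hα : 0 < α) (hα1 : α ≤ 1)
    (hf : ∀ y z : ℝ, 0 ≤ y → 0 ≤ z → |f y - f z| ≤ L * |y - z| ^ α)
    (n : ℕ) (hn : 1 ≤ n) (x : ℝ) (hx : 0 < x) :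
    |f x - ∑' (k : ℕ), f ((k : ℝ) / n) *
        (((n + k - 1).choose k : ℝ) * x ^ k / (1 + x) ^ (n + k))|
      ≤ L * (x * (x + 1) / n) ^ (α / 2) :=
  baskakov_plain_holder_general hα.le (hα1.trans one_le_two) (Nat.one_le_iff_ne_zero.mp hn) hx.le
    fun y hy ↦ hf y x hy hx.le
end

section
/- Let f : [0,∞) → ℝ be bounded with ‖f‖_∞ := sup_{y ∈ [0,∞)} |f(y)| < ∞, let n ≥ 1, x ∈ (0,∞), and set m = 2⌈nx⌉. Then the truncated Baskakov operator satisfies |S_n(f;x) − S̃_{n,m}(f;x)| ≤ ‖f‖_∞ · (1+x)/(n·x). -/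
/-!
The weights of the Baskakov operator at `x` are the point masses of a Pascal random variable `K`,
so the truncation error is at most `‖f‖_∞ * P(K > m)`, and `P(K > m)` is bounded by Chebyshev's
inequality. The mean and variance of `K` come from the size-bias identity
`E_n[K g(K)] = n x E_{n+1}[g(K + 1)]`. With `m = 2⌈nx⌉` the tail deviates from the mean `nx` by at
least `nx` itself, and the variance `nx(1 + x)` gives `P(K > m) ≤ (1 + x) / (nx)`.
-/

section Tail

variable {ι E : Type*} [NormedAddCommGroup E] [CompleteSpace E]

lemma norm_tsum_sub_sum_le_of_hasSum {f : ι → E} {g : ι → ℝ} {a : ℝ} (hg : HasSum g a)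
    {s : Finset ι} (hg_nonneg : ∀ i ∈ s, 0 ≤ g i) (hfg : ∀ i ∉ s, ‖f i‖ ≤ g i) :
    ‖∑' i, f i - ∑ i ∈ s, f i‖ ≤ a := by
  have hf : Summable f := hg.summable.of_norm_bounded_eventually <|
    s.finite_toSet.subset fun i hi => by_contra fun his => hi (hfg i his)
  rw [← hf.sum_add_tsum_subtype_compl s, add_sub_cancel_left]
  calc ‖∑' i : {i // i ∉ s}, f i‖
      ≤ a - ∑ i ∈ s, g i := tsum_of_norm_bounded (s.hasSum_iff_compl.1 hg) fun i => hfg i i.2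
    _ ≤ a := sub_le_self a (Finset.sum_nonneg hg_nonneg)

lemma norm_tsum_smul_sub_sum_smul_le_of_hasSum_sq [NormedSpace ℝ E] {w X : ι → ℝ} {μ V : ℝ}
    (hw : ∀ i, 0 ≤ w i) (hV : HasSum (fun i => (X i - μ) ^ 2 * w i) V)
    {f : ι → E} {s : Finset ι} {c C : ℝ} (hc : 0 < c) (hC : 0 ≤ C)
    (hX : ∀ i ∉ s, c ≤ |X i - μ|) (hf : ∀ i ∉ s, ‖f i‖ ≤ C) :
    ‖∑' i, w i • f i - ∑ i ∈ s, w i • f i‖ ≤ C * V / c ^ 2 := by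
  refine norm_tsum_sub_sum_le_of_hasSum ((hV.mul_left C).div_const (c ^ 2))
    (fun i _ => have := hw i; by positivity) fun i hi => ?_
  have hsq : c ^ 2 ≤ (X i - μ) ^ 2 := sq_abs (X i - μ) ▸ pow_le_pow_left₀ hc.le (hX i hi) 2
  calc ‖w i • f i‖ = w i * ‖f i‖ := by rw [norm_smul, Real.norm_of_nonneg (hw i)]
    _ ≤ w i * C := mul_le_mul_of_nonneg_left (hf i hi) (hw i)
    _ = C * (c ^ 2 * w i) / c ^ 2 := by field_simp
    _ ≤ C * ((X i - μ) ^ 2 * w i) / c ^ 2 := by have := hw i; gcongr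

end Tail

/-- The probability that a Pascal random variable with parameters `n`, `x` takes the value `k`.
The truncated subtraction is harmless: for `n = 0` it yields the point mass at `0`. -/
noncomputable def pascalWeight (n : ℕ) (x : ℝ) (k : ℕ) : ℝ :=
  ((n + k - 1).choose k : ℝ) * x ^ k / (1 + x) ^ (n + k)

section PascalWeight

variable {x : ℝ}

lemma pascalWeight_nonneg (hx : 0 ≤ x) (n k : ℕ) : 0 ≤ pascalWeight n x k := by
  unfold pascalWeight
  positivity

lemma pascalWeight_zero_left (x : ℝ) : pascalWeight 0 x = Pi.single 0 1 := by
  ext (_ | k) <;> simp [pascalWeight]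

lemma pascalWeight_succ_left (n : ℕ) (x : ℝ) (k : ℕ) :
    pascalWeight (n + 1) x k =
      ((k + n).choose n * (x / (1 + x)) ^ k) / (1 + x) ^ (n + 1) := by
  rw [pascalWeight, show n + 1 + k - 1 = k + n by lia, Nat.choose_symm_add, div_pow, pow_add,
    mul_div_assoc', div_div, mul_comm ((1 + x) ^ k)]

lemma hasSum_pascalWeight (hx : 0 ≤ x) (n : ℕ) : HasSum (pascalWeight n x) 1 := by
  cases n with
  | zero => exact pascalWeight_zero_left x ▸ hasSum_pi_single 0 1
  | succ n =>
    have hratio : ‖x / (1 + x)‖ < 1 := by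
      rw [Real.norm_of_nonneg (by positivity), div_lt_one (by positivity)]
      exact lt_one_add x
    have hcompl : 1 - x / (1 + x) = (1 + x)⁻¹ := by field_simp; ring
    have htotal : 1 / (1 - x / (1 + x)) ^ (n + 1) / (1 + x) ^ (n + 1) = 1 := by
      rw [hcompl, inv_pow]
      field_simp
    rw [← htotal, funext (pascalWeight_succ_left n x)]
    exact (hasSum_choose_mul_geometric_of_norm_lt_one n hratio).div_const _

lemma succ_mul_pascalWeight_succ (n : ℕ) (x : ℝ) (k : ℕ) :
    ((k : ℝ) + 1) * pascalWeight n x (k + 1) = n * x * pascalWeight (n + 1) x k := by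
  have hchoose : ((n + k).choose (k + 1) : ℝ) * (k + 1) = (n + k).choose k * n := by
    have h := Nat.choose_succ_right_eq (n + k) k
    rw [Nat.add_sub_cancel] at h
    exact_mod_cast h
  rw [pascalWeight, pascalWeight, show n + (k + 1) - 1 = n + k by lia,
    show n + 1 + k - 1 = n + k by lia, show n + (k + 1) = n + 1 + k by lia]
  linear_combination x ^ (k + 1) / (1 + x) ^ (n + 1 + k) * hchoose

lemma hasSum_natCast_mul_mul_pascalWeight {n : ℕ} {g : ℕ → ℝ} {a : ℝ}
    (hg : HasSum (fun k => g (k + 1) * pascalWeight (n + 1) x k) a) :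
    HasSum (fun k : ℕ => k * g k * pascalWeight n x k) (n * x * a) := by
  rw [← hasSum_nat_add_iff' 1]
  convert! hg.mul_left (n * x) using 1
  · ext k
    push_cast
    linear_combination g (k + 1) * succ_mul_pascalWeight_succ n x k
  · simp

lemma hasSum_natCast_mul_pascalWeight (hx : 0 ≤ x) (n : ℕ) :
    HasSum (fun k : ℕ => k * pascalWeight n x k) (n * x) := by
  have hshift : HasSum (fun k => 1 * pascalWeight (n + 1) x k) 1 := by
    simpa only [one_mul] using hasSum_pascalWeight hx (n + 1)
  simpa only [mul_one] using hasSum_natCast_mul_mul_pascalWeight (g := fun _ => 1) hshift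

lemma hasSum_natCast_sq_mul_pascalWeight (hx : 0 ≤ x) (n : ℕ) :
    HasSum (fun k : ℕ => (k : ℝ) ^ 2 * pascalWeight n x k) (n * x * ((n + 1) * x + 1)) := by
  have hshift : HasSum (fun k : ℕ => ((k + 1 : ℕ) : ℝ) * pascalWeight (n + 1) x k)
      ((n + 1) * x + 1) := by
    simpa [add_mul] using
      (hasSum_natCast_mul_pascalWeight hx (n + 1)).add (hasSum_pascalWeight hx (n + 1))
  simpa only [sq] using hasSum_natCast_mul_mul_pascalWeight hshift

lemma hasSum_sub_mean_sq_mul_pascalWeight (hx : 0 ≤ x) (n : ℕ) :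
    HasSum (fun k : ℕ => (k - n * x) ^ 2 * pascalWeight n x k) (n * x * (1 + x)) := by
  convert! ((hasSum_natCast_sq_mul_pascalWeight hx n).sub
    ((hasSum_natCast_mul_pascalWeight hx n).mul_left (2 * (n * x)))).add
    ((hasSum_pascalWeight hx n).mul_left ((n * x) ^ 2)) using 1
  · ext k
    ring
  · ring

end PascalWeight

section Baskakov

variable {E : Type*} [NormedAddCommGroup E] [NormedSpace ℝ E]

/-- The Baskakov operator `S_n(f; x)`, for functions with values in a normed space. -/
noncomputable def baskakov (n : ℕ) (f : ℝ → E) (x : ℝ) : E :=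
  ∑' k : ℕ, pascalWeight n x k • f (k / n)

/-- The truncated Baskakov operator `S̃_{n,m}(f; x)`, which keeps the terms with `k ≤ m`. -/
noncomputable def truncatedBaskakov (n m : ℕ) (f : ℝ → E) (x : ℝ) : E :=
  ∑ k ∈ Finset.range (m + 1), pascalWeight n x k • f (k / n)

theorem norm_baskakov_sub_truncatedBaskakov_le [CompleteSpace E] {f : ℝ → E} {n m : ℕ} {x c C : ℝ}
    (hx : 0 ≤ x) (hc : 0 < c) (hm : n * x + c ≤ m + 1)
    (hf : ∀ k : ℕ, m < k → ‖f (k / n)‖ ≤ C) :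
    ‖baskakov n f x - truncatedBaskakov n m f x‖ ≤ C * (n * x * (1 + x)) / c ^ 2 := by
  have hC : 0 ≤ C := (norm_nonneg _).trans (hf (m + 1) m.lt_succ_self)
  have hlt {k : ℕ} (hk : k ∉ Finset.range (m + 1)) : m < k := by simpa using hk
  refine norm_tsum_smul_sub_sum_smul_le_of_hasSum_sq (pascalWeight_nonneg hx n)
    (hasSum_sub_mean_sq_mul_pascalWeight hx n) hc hC (fun k hk => le_abs.2 (.inl ?_))
    fun k hk => hf k (hlt hk)
  have hmk : (m : ℝ) + 1 ≤ k := mod_cast hlt hk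
  linarith

theorem baskakov_truncation_error_general [CompleteSpace E] {f : ℝ → E} {n m : ℕ} {x C : ℝ}
    (hn : 1 ≤ n) (hx : 0 < x) (hm : 2 * (n * x) ≤ m + 1)
    (hf : ∀ k : ℕ, m < k → ‖f (k / n)‖ ≤ C) :
    ‖baskakov n f x - truncatedBaskakov n m f x‖ ≤ C * (1 + x) / (n * x) := by
  have hnx : 0 < n * x := by positivity
  calc ‖baskakov n f x - truncatedBaskakov n m f x‖
      ≤ C * (n * x * (1 + x)) / (n * x) ^ 2 :=
        norm_baskakov_sub_truncatedBaskakov_le hx.le hnx (by linarith) hf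
    _ = C * (1 + x) / (n * x) := by field_simp

end Baskakov

/-- Truncation error for the Baskakov operator of a bounded function with truncation point
`m = 2⌈nx⌉`: `|S_n(f;x) - S̃_{n,m}(f;x)| ≤ ‖f‖_∞ · (1+x)/(n·x)`. -/
theorem baskakov_truncation_error
    (f : ℝ → ℝ) (hbdd : BddAbove ((fun y => |f y|) '' Set.Ici (0 : ℝ)))
    (n : ℕ) (hn : 1 ≤ n) (x : ℝ) (hx : 0 < x) :
    |(∑' (k : ℕ), f ((k : ℝ) / n) *
          (((n + k - 1).choose k : ℝ) * x ^ k / (1 + x) ^ (n + k))) -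
        ∑ k ∈ Finset.range (2 * ⌈(n : ℝ) * x⌉₊ + 1),
          f ((k : ℝ) / n) * (((n + k - 1).choose k : ℝ) * x ^ k / (1 + x) ^ (n + k))|
      ≤ sSup ((fun y => |f y|) '' Set.Ici (0 : ℝ)) * (1 + x) / (n * x) := by
  have hm : 2 * (n * x) ≤ (2 * ⌈n * x⌉₊ : ℕ) + 1 := by
    push_cast
    linarith [Nat.le_ceil (n * x)]
  simp_rw [mul_comm (f _)]
  exact baskakov_truncation_error_general (f := f) hn hx hm fun k _ =>
    le_csSup hbdd ⟨_, Set.mem_Ici.2 (by positivity), rfl⟩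
end
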